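/- arXiv:2512.24736 — 3 statements merged into one kernel-verified Lean document; each statement's English description precedes it below -/
import Mathlib

section
/- Let ξ be a k-dimensional Gaussian random vector with mean μ and positive definite covariance matrix Σ, B an m×k matrix with rows b_i^⊤, and x ∈ ℝ^m a point such that the system Bz ≤ x is nondegenerate (i.e., for every index set I ⊂ {1,…,m} for which there exists z with b_i^⊤z = x_i for i ∈ I and b_i^⊤z < x_i for i ∉ I, the vectors {b_i}_{i∈I} are linearly independent). Define S^(i) = Σ − (1/(b_i^⊤Σb_i)) Σb_i b_i^⊤Σ, w^(i) = μ + ((x_i − b_i^⊤μ)/(b_i^⊤Σb_i)) Σb_i, and let L^(i) be a k×(k−1) matrix of rank k−1 with S^(i) = L^(i)(L^(i))^⊤. Then ∂/∂x_i Pr{Bξ ≤ x} = g_i(x_i) · Pr{B^(i)L^(i)ξ^(i) ≤ x^(i) − B^(i)w^(i)}, where ξ^(i) is a standard (k−1)-dimensional Gaussian vector, B^(i) and x^(i) result from B and x by deleting row/component i, and g_i is the one-dimensional normal density with mean b_i^⊤μ and variance b_i^⊤Σb_i. Moreover, the inequality system B^(i)L^(i)y ≤ x^(i) − B^(i)w^(i)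 is nondegenerate. -/
open MeasureTheory ProbabilityTheory Filter Set Matrix
open scoped ENNReal NNReal

/-- Density of the multivariate normal distribution `𝒩(μ, Σ)` on `ℝ^k`. -/
noncomputable def gaussianPdf {k : ℕ} (μ : Fin k → ℝ) (Sig : Matrix (Fin k) (Fin k) ℝ)
    (z : Fin k → ℝ) : ℝ :=
  (Real.sqrt ((2 * Real.pi) ^ k * Sig.det))⁻¹ *
    Real.exp (-(1 / 2) * ((z - μ) ⬝ᵥ Sig⁻¹.mulVec (z - μ)))

/-- The multivariate normal distribution `𝒩(μ, Σ)` on `ℝ^k`. -/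
noncomputable def gaussianMeasure {k : ℕ} (μ : Fin k → ℝ)
    (Sig : Matrix (Fin k) (Fin k) ℝ) : Measure (Fin k → ℝ) :=
  volume.withDensity (fun z => ENNReal.ofReal (gaussianPdf μ Sig z))

/-- The inequality system `Az ≤ c` is nondegenerate: for every active index set `I`
(realized by some `z` with `Aᵢz = cᵢ` for `i ∈ I` and `Aᵢz < cᵢ` otherwise), the
rows `{Aᵢ}_{i ∈ I}` are linearly independent (i.e. `rank {Aᵢ}_{i∈I} = #I`). -/
def NondegenerateSystem {n p : ℕ} (A : Matrix (Fin n) (Fin p) ℝ) (c : Fin n → ℝ) :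
    Prop :=
  ∀ I : Finset (Fin n),
    (∃ z : Fin p → ℝ, (∀ i ∈ I, A i ⬝ᵥ z = c i) ∧ ∀ i ∉ I, A i ⬝ᵥ z < c i) →
    LinearIndependent ℝ (fun i : I => A i)

lemma hm_pdf_cons {k : ℕ} (u : ℝ) (y : Fin k → ℝ) :
    gaussianPdf (0 : Fin (k+1) → ℝ) 1 (Fin.cons u y) =
      gaussianPDFReal 0 1 u * gaussianPdf (0 : Fin k → ℝ) 1 y := by
  have h : (0:ℝ) ≤ 2 * Real.pi := by positivity
  simp only [gaussianPdf, gaussianPDFReal, Matrix.det_one, mul_one, inv_one, Matrix.one_mulVec,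
    sub_zero, NNReal.coe_one]
  rw [pow_succ, Real.sqrt_mul (by positivity), mul_inv]
  have : (Fin.cons u y : Fin (k+1) → ℝ) ⬝ᵥ (Fin.cons u y) = u^2 + y ⬝ᵥ y := by
    simp [dotProduct, Fin.sum_univ_succ, sq]
  rw [this, mul_add, Real.exp_add]
  have e : -(1/2) * u^2 = -u^2/2 := by ring
  rw [e]
  ring

lemma hm_pdf_cont {k : ℕ} (μ : Fin k → ℝ) (S : Matrix (Fin k) (Fin k) ℝ) :
    Continuous (gaussianPdf μ S) := by
  unfold gaussianPdf
  have : Continuous fun z : Fin k → ℝ => (z - μ) ⬝ᵥ S⁻¹.mulVec (z - μ) := by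
    apply Continuous.dotProduct (by fun_prop)
    apply Continuous.matrix_mulVec <;> fun_prop
  fun_prop

lemma hm_pdf_meas {k : ℕ} (μ : Fin k → ℝ) (S : Matrix (Fin k) (Fin k) ℝ) :
    Measurable (fun z => ENNReal.ofReal (gaussianPdf μ S z)) :=
  (hm_pdf_cont μ S).measurable.ennreal_ofReal

lemma hm_pdf_nonneg {k : ℕ} (μ : Fin k → ℝ) (S : Matrix (Fin k) (Fin k) ℝ) (z) :
    0 ≤ gaussianPdf μ S z := by
  unfold gaussianPdf; positivity

lemma hm_split {k : ℕ} (A : Set (Fin (k+1) → ℝ)) (hA : MeasurableSet A) :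
    gaussianMeasure (0 : Fin (k+1) → ℝ) 1 A =
      ∫⁻ u, ENNReal.ofReal (gaussianPDFReal 0 1 u) *
        gaussianMeasure (0 : Fin k → ℝ) 1 {y | (Fin.cons u y : Fin (k+1) → ℝ) ∈ A} := by
  have hmp := (volume_preserving_piFinSuccAbove (fun _ : Fin (k+1) => ℝ) 0).symm
  have hc : Measurable (fun p : ℝ × (Fin k → ℝ) => (Fin.cons p.1 p.2 : Fin (k+1) → ℝ)) := by
    refine measurable_pi_iff.2 fun j => ?_
    refine Fin.cases ?_ (fun j => ?_) j
    · simpa using measurable_fst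
    · simpa using! (measurable_pi_apply j).comp measurable_snd
  have hmeas : Measurable (A.indicator fun z => ENNReal.ofReal (gaussianPdf (0 : Fin (k+1) → ℝ) 1 z)) :=
    (hm_pdf_meas _ _).indicator hA
  rw [gaussianMeasure, withDensity_apply _ hA, ← lintegral_indicator hA,
    ← hmp.lintegral_comp hmeas]
  have e : ∀ p : ℝ × (Fin k → ℝ),
      (MeasurableEquiv.piFinSuccAbove (fun _ : Fin (k+1) => ℝ) 0).symm p = Fin.cons p.1 p.2 := by
    intro p
    simp [MeasurableEquiv.piFinSuccAbove, Fin.consEquiv]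
  simp only [e]
  rw [Measure.volume_eq_prod, lintegral_prod (fun p : ℝ × (Fin k → ℝ) => A.indicator (fun z => ENNReal.ofReal (gaussianPdf (0 : Fin (k+1) → ℝ) 1 z)) (Fin.cons p.1 p.2)) (hmeas.comp hc).aemeasurable]
  refine lintegral_congr fun u => ?_
  have hAu : MeasurableSet {y : Fin k → ℝ | (Fin.cons u y : Fin (k+1) → ℝ) ∈ A} :=
    (hc.comp measurable_prodMk_left) hA
  rw [gaussianMeasure, withDensity_apply _ hAu, ← lintegral_indicator hAu,
    ← lintegral_const_mul _ ((hm_pdf_meas _ _).indicator hAu)]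
  refine lintegral_congr fun y => ?_
  by_cases h : (Fin.cons u y : Fin (k+1) → ℝ) ∈ A
  · rw [indicator_of_mem h, indicator_of_mem (by exact h), hm_pdf_cons,
      ENNReal.ofReal_mul (gaussianPDFReal_nonneg _ _ _)]
  · rw [indicator_of_notMem h, indicator_of_notMem (by exact h), mul_zero]

lemma hm_prob (k : ℕ) : gaussianMeasure (0 : Fin k → ℝ) 1 univ = 1 := by
  induction k with
  | zero =>
    rw [gaussianMeasure, withDensity_apply _ MeasurableSet.univ]
    simp [gaussianPdf, Measure.restrict_univ]
    rw [volume_pi, Measure.pi_of_empty]; simp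
  | succ k ih =>
    rw [hm_split _ MeasurableSet.univ]
    simp only [mem_univ, Set.ofPred_true, ih, mul_one]
    exact lintegral_gaussianPDFReal_eq_one 0 one_ne_zero

instance hm_isProb (k : ℕ) : IsProbabilityMeasure (gaussianMeasure (0 : Fin k → ℝ) 1) := ⟨hm_prob k⟩

lemma hm_hyper {k : ℕ} (a : Fin k → ℝ) (ha : a ≠ 0) (c : ℝ) :
    gaussianMeasure (0 : Fin k → ℝ) 1 {y | a ⬝ᵥ y = c} = 0 := by
  refine withDensity_absolutelyContinuous _ _ ?_
  by_cases h : ∃ p, a ⬝ᵥ p = c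
  · obtain ⟨p, hp⟩ := h
    let f : (Fin k → ℝ) →ₗ[ℝ] ℝ := 
      { toFun := fun y => a ⬝ᵥ y
        map_add' := fun x y => dotProduct_add _ _ _
        map_smul' := fun r x => by simp }
    have : {y | a ⬝ᵥ y = c} = (fun y => y + (-p)) ⁻¹' (LinearMap.ker f : Set (Fin k → ℝ)) := by
      ext y
      simp [f, dotProduct_add, hp, add_neg_eq_zero]
    rw [this, measure_preimage_add_right]
    apply Measure.addHaar_submodule
    intro ht
    have : a ∈ LinearMap.ker f := by rw [ht]; trivial
    have h2 : a ⬝ᵥ a = 0 := this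
    exact ha (dotProduct_self_eq_zero.1 h2)
  · push Not at h
    have : {y | a ⬝ᵥ y = c} = ∅ := by
      ext y; simpa using h y
    rw [this, measure_empty]

lemma hm_affine {k : ℕ} (μ : Fin k → ℝ) (Sig M : Matrix (Fin k) (Fin k) ℝ)
    (hSig : Sig.PosDef) (hM : M * Mᵀ = Sig) (A : Set (Fin k → ℝ)) (hA : MeasurableSet A) :
    gaussianMeasure μ Sig A =
      gaussianMeasure (0 : Fin k → ℝ) 1 {v | M.mulVec v + μ ∈ A} := by
  have hdet : M.det * M.det = Sig.det := by rw [← hM, det_mul, det_transpose]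
  have hd0 : M.det ≠ 0 := by
    intro h; have := hSig.det_pos; rw [← hdet, h] at this; simp at this
  have hU : IsUnit M.det := isUnit_iff_ne_zero.2 hd0
  have hUt : IsUnit Mᵀ.det := by rwa [det_transpose]
  have hpdf : ∀ v, gaussianPdf (0 : Fin k → ℝ) 1 v = |M.det| * gaussianPdf μ Sig (M.mulVec v + μ) := by
    intro v
    simp only [gaussianPdf, add_sub_cancel_right, sub_zero, inv_one, one_mulVec, det_one, mul_one]
    have e : M.mulVec v ⬝ᵥ Sig⁻¹.mulVec (M.mulVec v) = v ⬝ᵥ v := by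
      rw [← hM, Matrix.mul_inv_rev, mulVec_mulVec, Matrix.mul_assoc, nonsing_inv_mul _ hU,
        Matrix.mul_one, ← vecMul_transpose, ← dotProduct_mulVec, mulVec_mulVec, mul_nonsing_inv _ hUt,
        one_mulVec]
    rw [e, ← hdet, Real.sqrt_mul (by positivity), Real.sqrt_mul_self_eq_abs, mul_inv]
    have : |M.det| ≠ 0 := abs_ne_zero.2 hd0
    field_simp
  have hmul : Measurable fun v : Fin k → ℝ => M.mulVec v :=
    (Continuous.matrix_mulVec continuous_const continuous_id).measurable
  have hpre : MeasurableSet {v | M.mulVec v + μ ∈ A} := (hmul.add_const μ) hA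
  have hmeas := (hm_pdf_meas μ Sig).indicator hA
  have hvol : (volume : Measure (Fin k → ℝ)) = ENNReal.ofReal |M.det| • Measure.map (toLin' M) volume := by
    rw [Real.map_matrix_volume_pi_eq_smul_volume_pi hd0, smul_smul,
      ← ENNReal.ofReal_mul (abs_nonneg _), ← abs_mul, mul_inv_cancel₀ hd0]
    simp
  rw [gaussianMeasure, withDensity_apply _ hA, gaussianMeasure, withDensity_apply _ hpre,
    ← lintegral_indicator hA, ← lintegral_indicator hpre, ← lintegral_add_right_eq_self _ μ]
  conv_lhs => rw [hvol]
  rw [lintegral_smul_measure, lintegral_map (f := fun z => A.indicator (fun z => ENNReal.ofReal (gaussianPdf μ Sig z)) (z + μ)) (hmeas.comp (measurable_add_const μ))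
    (by simpa [Matrix.toLin'_apply] using! hmul), smul_eq_mul,
    ← lintegral_const_mul]
  · refine lintegral_congr fun v => ?_
    by_cases h : M.mulVec v + μ ∈ A
    · rw [toLin'_apply, indicator_of_mem h, indicator_of_mem (by exact h), hpdf,
        ENNReal.ofReal_mul (abs_nonneg _)]
    · rw [toLin'_apply, indicator_of_notMem h, indicator_of_notMem (by exact h), mul_zero]
  · exact (hmeas.comp (measurable_add_const μ)).comp (by simpa [Matrix.toLin'_apply] using! hmul)

lemma hm_ftc (f : ℝ → ℝ) (hf : Integrable f) (hm : StronglyMeasurable f) (u0 : ℝ)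
    (hc : ContinuousAt f u0) : HasDerivAt (fun u => ∫ x in Iic u, f x) (f u0) u0 := by
  have h := intervalIntegral.integral_hasDerivAt_right (a := u0) (b := u0)
    hf.intervalIntegrable (hm.stronglyMeasurableAtFilter) hc
  have h2 := h.const_add (∫ x in Iic u0, f x)
  refine h2.congr_of_eventuallyEq (Eventually.of_forall fun u => ?_)
  simp only
  rw [← intervalIntegral.integral_Iic_sub_Iic hf.integrableOn hf.integrableOn]
  ring

lemma hm_sigma_pos {k : ℕ} (Sig : Matrix (Fin (k + 1)) (Fin (k + 1)) ℝ)
    (hSig : Sig.PosDef) (b : Fin (k+1) → ℝ)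
    (L : Matrix (Fin (k + 1)) (Fin k) ℝ)
    (hL : Sig - (b ⬝ᵥ Sig.mulVec b)⁻¹ • vecMulVec (Sig.mulVec b) (vecMul b Sig)
      = L * L.transpose) : 0 < b ⬝ᵥ Sig.mulVec b := by
  have hb : b ≠ 0 := by
    rintro rfl
    simp at hL
    have h1 : Sig.rank = k + 1 := by
      rw [Matrix.rank_of_isUnit _ hSig.isUnit]; simp
    have h2 : Sig.rank ≤ k := by
      rw [hL]
      exact (rank_mul_le_left _ _).trans ((rank_le_card_width _).trans (by simp))
    omega
  simpa using hSig.dotProduct_mulVec_pos hb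

lemma hm_ker {k : ℕ} (Sig : Matrix (Fin (k + 1)) (Fin (k + 1)) ℝ)
    (hSig : Sig.PosDef) (b : Fin (k+1) → ℝ)
    (L : Matrix (Fin (k + 1)) (Fin k) ℝ)
    (hL : Sig - (b ⬝ᵥ Sig.mulVec b)⁻¹ • vecMulVec (Sig.mulVec b) (vecMul b Sig)
      = L * L.transpose) (v : Fin (k+1) → ℝ) (hv : vecMul v L = 0) : ∃ c : ℝ, v = c • b := by
  refine ⟨(b ⬝ᵥ Sig.mulVec b)⁻¹ * (b ⬝ᵥ Sig.mulVec v), ?_⟩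
  have h : (L * Lᵀ).mulVec v = 0 := by
    rw [← mulVec_mulVec, mulVec_transpose, hv, mulVec_zero]
  rw [← hL, sub_mulVec, smul_mulVec, vecMulVec_mulVec, ← dotProduct_mulVec, sub_eq_zero] at h
  have hinj := Matrix.mulVec_injective_iff_isUnit.2 hSig.isUnit
  apply hinj
  show Sig.mulVec v = Sig.mulVec _
  refine h.trans ?_
  rw [mulVec_smul, mul_smul, op_smul_eq_smul]

lemma hm_vecMul {k : ℕ} (Sig : Matrix (Fin (k + 1)) (Fin (k + 1)) ℝ)
    (b : Fin (k+1) → ℝ)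
    (L : Matrix (Fin (k + 1)) (Fin k) ℝ) (hpos : 0 < b ⬝ᵥ Sig.mulVec b)
    (hL : Sig - (b ⬝ᵥ Sig.mulVec b)⁻¹ • vecMulVec (Sig.mulVec b) (vecMul b Sig)
      = L * L.transpose) : vecMul b L = 0 := by
  have h : (L * Lᵀ).mulVec b = 0 := by
    rw [← hL, sub_mulVec, smul_mulVec, vecMulVec_mulVec, ← dotProduct_mulVec]
    simp [hpos.ne']
  rw [← dotProduct_self_eq_zero, ← dotProduct_mulVec, ← mulVec_transpose, mulVec_mulVec, h]
  simp

lemma hm_row {k m : ℕ} (B : Matrix (Fin (m + 1)) (Fin (k + 1)) ℝ) (i : Fin (m + 1))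
    (L : Matrix (Fin (k + 1)) (Fin k) ℝ) (j : Fin m) :
    (B.submatrix i.succAbove id * L) j = vecMul (B (i.succAbove j)) L := by
  ext a
  simp [Matrix.mul_apply, vecMul, dotProduct]

lemma hm_nondeg {k m : ℕ} (Sig : Matrix (Fin (k + 1)) (Fin (k + 1)) ℝ)
    (hSig : Sig.PosDef)
    (B : Matrix (Fin (m + 1)) (Fin (k + 1)) ℝ) (x : Fin (m + 1) → ℝ)
    (hnd : NondegenerateSystem B x) (i : Fin (m + 1))
    (w : Fin (k + 1) → ℝ) (hwi : B i ⬝ᵥ w = x i)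
    (L : Matrix (Fin (k + 1)) (Fin k) ℝ)
    (hL : Sig - (B i ⬝ᵥ Sig.mulVec (B i))⁻¹ •
      vecMulVec (Sig.mulVec (B i)) (vecMul (B i) Sig) = L * L.transpose) :
    NondegenerateSystem (B.submatrix i.succAbove id * L)
      (fun j => x (i.succAbove j) - (B.submatrix i.succAbove id).mulVec w j) := by
  have hpos := hm_sigma_pos Sig hSig (B i) L hL
  have hbL := hm_vecMul Sig (B i) L hpos hL
  rintro I ⟨y, hy1, hy2⟩
  have key : ∀ j, B (i.succAbove j) ⬝ᵥ (L.mulVec y + w) =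
      (B.submatrix i.succAbove id * L) j ⬝ᵥ y + (B.submatrix i.succAbove id).mulVec w j := by
    intro j
    rw [hm_row, dotProduct_add, dotProduct_mulVec]
    rfl
  have hmem : ∀ j, i.succAbove j ∈ insert i (I.map i.succAboveEmb) ↔ j ∈ I := by
    intro j
    simp [Fin.succAbove_ne]
  have hli := hnd (insert i (I.map i.succAboveEmb)) ⟨L.mulVec y + w, by
    intro j
    refine Fin.succAboveCases i ?_ (fun j => ?_) j
    · intro _
      rw [dotProduct_add, dotProduct_mulVec, hbL, hwi]; simp
    · intro hj
      rw [hmem] at hj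
      rw [key, hy1 j hj]; ring, by
    intro j
    refine Fin.succAboveCases i ?_ (fun j => ?_) j
    · intro h; simp at h
    · intro hj
      rw [hmem] at hj
      rw [key]; linarith [hy2 j hj]⟩
  have hli' : LinearIndepOn ℝ (fun a => B a) (insert i (i.succAbove '' (I : Set (Fin m)))) := by
    have e : (insert i (i.succAbove '' (I : Set (Fin m)))) =
      ((insert i (I.map i.succAboveEmb) : Finset (Fin (m+1))) : Set (Fin (m+1))) := by
      simp
    rw [e]; exact hli
  obtain ⟨h1, h2⟩ := (linearIndepOn_insert (K := ℝ) (f := fun a => B a) (a := i) (s := i.succAbove '' (I : Set (Fin m))) (by simp [Fin.succAbove_ne])).1 hli'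
  have h1' : LinearIndependent ℝ (fun j : I => B (i.succAbove j)) :=
    (LinearIndepOn.comp_of_image (v := fun a => B a) (f := i.succAbove) (s := (I : Set (Fin m))) h1
      (Fin.succAbove_right_injective.injOn) : LinearIndepOn ℝ ((fun a => B a) ∘ i.succAbove) _)
  have e : (fun j : I => (B.submatrix i.succAbove id * L) j) =
      (L.vecMulLinear) ∘ (fun j : I => B (i.succAbove j)) := by
    ext1 j; rw [hm_row]; rfl
  rw [e]
  refine h1'.map ?_
  rw [Submodule.disjoint_def]
  intro v hv hv2
  obtain ⟨c, hc⟩ := hm_ker Sig hSig (B i) L hL v hv2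
  by_cases hc0 : c = 0
  · rw [hc, hc0, zero_smul]
  · exfalso
    apply h2
    have : B i = c⁻¹ • v := by rw [hc, smul_smul, inv_mul_cancel₀ hc0, one_smul]
    rw [this]
    refine Submodule.smul_mem _ _ ?_
    have e2 : (fun a => B a) '' (i.succAbove '' (I : Set (Fin m))) = range (fun j : I => B (i.succAbove j)) := by
      ext; simp
    rw [e2]; exact hv

lemma hm_cont {k m : ℕ} (A : Matrix (Fin m) (Fin k) ℝ) (c : ℝ → Fin m → ℝ) (hc : Continuous c)
    (u0 : ℝ) (hnd : NondegenerateSystem A (c u0)) :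
    Tendsto (fun u => gaussianMeasure (0 : Fin k → ℝ) 1 {y | ∀ j, A.mulVec y j ≤ c u j})
      (nhds u0) (nhds (gaussianMeasure (0 : Fin k → ℝ) 1 {y | ∀ j, A.mulVec y j ≤ c u0 j})) := by
  have hAc : Continuous fun y : Fin k → ℝ => A.mulVec y :=
    Continuous.matrix_mulVec continuous_const continuous_id
  have hms : ∀ u, MeasurableSet {y : Fin k → ℝ | ∀ j, A.mulVec y j ≤ c u j} := by
    intro u
    have : IsClosed {y : Fin k → ℝ | ∀ j, A.mulVec y j ≤ c u j} := by
      simp only [Set.ofPred_forall]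
      exact isClosed_iInter fun j => isClosed_le ((continuous_apply j).comp hAc) continuous_const
    exact this.measurableSet
  refine tendsto_measure_of_ae_tendsto_indicator_of_isFiniteMeasure _ (hms u0) hms ?_
  have hae : ∀ᵐ y ∂(gaussianMeasure (0 : Fin k → ℝ) 1), ∀ j, A j ≠ 0 → A j ⬝ᵥ y ≠ c u0 j := by
    rw [ae_all_iff]
    intro j
    by_cases h : A j = 0
    · simp [h]
    · have := hm_hyper (A j) h (c u0 j)
      filter_upwards [measure_eq_zero_iff_ae_notMem.1 this] with y hy _
      exact hy
  filter_upwards [hae] with y hy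
  have hcj : ∀ j, Tendsto (fun u => c u j) (nhds u0) (nhds (c u0 j)) := fun j =>
    ((continuous_apply j).comp hc).tendsto u0
  by_cases hf : ∀ j, A.mulVec y j ≤ c u0 j
  · have hstrict : ∀ j, A.mulVec y j < c u0 j := by
      intro j
      refine lt_of_le_of_ne (hf j) fun heq => ?_
      have hj : A j ≠ 0 := by
        classical
        have := hnd (Finset.univ.filter fun j => A.mulVec y j = c u0 j)
          ⟨y, fun j hj => (Finset.mem_filter.1 hj).2, fun j hj => lt_of_le_of_ne (hf j)
            fun h => hj (Finset.mem_filter.2 ⟨Finset.mem_univ _, h⟩)⟩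
        exact this.ne_zero ⟨j, Finset.mem_filter.2 ⟨Finset.mem_univ _, heq⟩⟩
      exact hy j hj heq
    have : ∀ᶠ u in nhds u0, ∀ j, A.mulVec y j < c u j :=
      eventually_all.2 fun j => (hcj j).eventually_const_lt (hstrict j)
    filter_upwards [this] with u hu
    exact ⟨fun _ => hf, fun _ j => (hu j).le⟩
  · have hf' := hf
    push Not at hf'
    obtain ⟨j, hj⟩ := hf'
    filter_upwards [(hcj j).eventually_lt_const hj] with u hu
    exact ⟨fun h => absurd (h j) (not_le.2 hu), fun h => absurd h hf⟩

lemma hm_M {k : ℕ} (Sig : Matrix (Fin (k + 1)) (Fin (k + 1)) ℝ)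
    (hSig : Sig.PosDef) (b : Fin (k+1) → ℝ)
    (L : Matrix (Fin (k + 1)) (Fin k) ℝ) (hpos : 0 < b ⬝ᵥ Sig.mulVec b)
    (hL : Sig - (b ⬝ᵥ Sig.mulVec b)⁻¹ • vecMulVec (Sig.mulVec b) (vecMul b Sig)
      = L * L.transpose) (M : Matrix (Fin (k+1)) (Fin (k+1)) ℝ)
    (hM : M = Matrix.of fun a => Fin.cons (Sig.mulVec b a / √(b ⬝ᵥ Sig.mulVec b)) (L a)) :
    M * Mᵀ = Sig := by
  have hsym : vecMul b Sig = Sig.mulVec b := by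
    have : Sigᵀ = Sig := by simpa using hSig.isHermitian.eq
    rw [← mulVec_transpose, this]
  have hs := Real.mul_self_sqrt hpos.le
  have e : Sig = (b ⬝ᵥ Sig.mulVec b)⁻¹ • vecMulVec (Sig.mulVec b) (vecMul b Sig) + L * Lᵀ := by
    rw [← hL]; abel
  conv_rhs => rw [e]
  ext p q
  simp only [hM, Matrix.mul_apply, Fin.sum_univ_succ, transpose_apply, of_apply, Fin.cons_zero,
    Fin.cons_succ, Matrix.add_apply, Matrix.smul_apply, vecMulVec_apply, hsym, smul_eq_mul]
  congr 1
  rw [div_mul_div_comm, hs]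
  ring

lemma hm_cons_mulVec {k : ℕ} (q : Fin (k+1) → ℝ) (L : Matrix (Fin (k + 1)) (Fin k) ℝ)
    (u : ℝ) (y : Fin k → ℝ) (a : Fin (k+1)) :
    ((Matrix.of fun a => (Fin.cons (q a) (L a) : Fin (k+1) → ℝ)) *ᵥ (Fin.cons u y)) a =
      q a * u + L.mulVec y a := by
  simp [mulVec, dotProduct, Fin.sum_univ_succ]

/-- Henrion–Möller gradient formula: for `ξ ∼ 𝒩(μ, Σ)` with `Σ ≻ 0`
and a nondegenerate system `Bz ≤ x`,
`∂/∂xᵢ Pr{Bξ ≤ x} = gᵢ(xᵢ) · Pr{B⁽ⁱ⁾L⁽ⁱ⁾ξ⁽ⁱ⁾ ≤ x⁽ⁱ⁾ - B⁽ⁱ⁾w⁽ⁱ⁾}` with `ξ⁽ⁱ⁾`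
standard Gaussian in dimension `k - 1`, and the reduced system is again
nondegenerate. -/
theorem henrion_moller_gradient
    {k m : ℕ}
    (μ : Fin (k + 1) → ℝ) (Sig : Matrix (Fin (k + 1)) (Fin (k + 1)) ℝ)
    (hSig : Sig.PosDef)
    (B : Matrix (Fin (m + 1)) (Fin (k + 1)) ℝ) (x : Fin (m + 1) → ℝ)
    (hnd : NondegenerateSystem B x)
    (i : Fin (m + 1))
    -- `S⁽ⁱ⁾ = Σ - (1/(bᵢᵀΣbᵢ)) Σbᵢbᵢᵀ Σ` and
    -- `w⁽ⁱ⁾ = μ + ((xᵢ - bᵢᵀμ)/(bᵢᵀΣbᵢ)) Σbᵢ`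
    (S : Matrix (Fin (k + 1)) (Fin (k + 1)) ℝ)
    (hS : S = Sig - (B i ⬝ᵥ Sig.mulVec (B i))⁻¹ •
      vecMulVec (Sig.mulVec (B i)) (vecMul (B i) Sig))
    (w : Fin (k + 1) → ℝ)
    (hw : w = μ + ((x i - B i ⬝ᵥ μ) / (B i ⬝ᵥ Sig.mulVec (B i))) • Sig.mulVec (B i))
    -- the factorization `S⁽ⁱ⁾ = L⁽ⁱ⁾ (L⁽ⁱ⁾)ᵀ` with `L⁽ⁱ⁾` of full column rank `k`
    (L : Matrix (Fin (k + 1)) (Fin k) ℝ)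
    (hL : S = L * L.transpose) (hrank : L.rank = k)
    -- the one-dimensional normal density `gᵢ` with mean `bᵢᵀμ` and variance `bᵢᵀΣbᵢ`
    (g : ℝ → ℝ)
    (hg : ∀ s, g s = (Real.sqrt (2 * Real.pi * (B i ⬝ᵥ Sig.mulVec (B i))))⁻¹ *
      Real.exp (-(s - B i ⬝ᵥ μ) ^ 2 / (2 * (B i ⬝ᵥ Sig.mulVec (B i))))) :
    HasDerivAt
      (fun s =>
        (gaussianMeasure μ Sig
          {z | ∀ j, B.mulVec z j ≤ Function.update x i s j}).toReal)
      (g (x i) *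
        (gaussianMeasure (0 : Fin k → ℝ) (1 : Matrix (Fin k) (Fin k) ℝ)
          {y | ∀ j : Fin m,
            (B.submatrix i.succAbove id * L).mulVec y j ≤
              x (i.succAbove j) - (B.submatrix i.succAbove id).mulVec w j}).toReal)
      (x i) ∧
    NondegenerateSystem (B.submatrix i.succAbove id * L)
      (fun j => x (i.succAbove j) - (B.submatrix i.succAbove id).mulVec w j) := by
  rw [hS] at hL
  set b := B i with hb
  set v := b ⬝ᵥ Sig.mulVec b with hv
  have hpos : 0 < v := hm_sigma_pos Sig hSig b L hL
  have hbL := hm_vecMul Sig b L hpos hL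
  set σ := √v with hσ
  have hσ0 : 0 < σ := Real.sqrt_pos.2 hpos
  have hss : σ * σ = v := Real.mul_self_sqrt hpos.le
  have hwi : B i ⬝ᵥ w = x i := by
    rw [hw, dotProduct_add, dotProduct_smul, ← hb, ← hv, smul_eq_mul]
    field_simp; ring
  have hND := hm_nondeg Sig hSig B x hnd i w hwi L hL
  refine ⟨?_, hND⟩
  set A := B.submatrix i.succAbove id * L with hA
  set wt : ℝ → Fin (k+1) → ℝ := fun u => μ + (u / σ) • Sig.mulVec b with hwt
  set c : ℝ → Fin m → ℝ := fun u j => x (i.succAbove j) - (B.submatrix i.succAbove id).mulVec (wt u) j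
    with hcdef
  have hc : Continuous c := by
    have h1 : Continuous wt := by fun_prop
    have h2 : Continuous fun u => (B.submatrix i.succAbove id).mulVec (wt u) :=
      Continuous.matrix_mulVec continuous_const h1
    fun_prop
  set u0 := (x i - b ⬝ᵥ μ) / σ with hu0
  have hw0 : w = wt u0 := by
    rw [hw, hwt, hu0]; simp only
    rw [div_div, hss]
  set γ := gaussianMeasure (0 : Fin k → ℝ) 1 with hγ
  set f : ℝ → ℝ := fun u => gaussianPDFReal 0 1 u * (γ {y | ∀ j, A.mulVec y j ≤ c u j}).toReal with hf
  have hAc : Continuous fun y : Fin k → ℝ => A.mulVec y :=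
    Continuous.matrix_mulVec continuous_const continuous_id
  have hE : MeasurableSet {p : ℝ × (Fin k → ℝ) | ∀ j, A.mulVec p.2 j ≤ c p.1 j} := by
    have : IsClosed {p : ℝ × (Fin k → ℝ) | ∀ j, A.mulVec p.2 j ≤ c p.1 j} := by
      simp only [Set.ofPred_forall]
      exact isClosed_iInter fun j => isClosed_le
        ((continuous_apply j).comp (hAc.comp continuous_snd))
        ((continuous_apply j).comp (hc.comp continuous_fst))
    exact this.measurableSet
  have hHm : Measurable fun u => γ {y | ∀ j, A.mulVec y j ≤ c u j} :=
    measurable_measure_prodMk_left (ν := γ) hE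
  have hfm : Measurable f := (measurable_gaussianPDFReal 0 1).mul hHm.ennreal_toReal
  have hf0 : ∀ u, 0 ≤ f u := fun u =>
    mul_nonneg (gaussianPDFReal_nonneg _ _ _) ENNReal.toReal_nonneg
  have hfi : Integrable f := by
    refine (integrable_gaussianPDFReal 0 1).mono' hfm.aestronglyMeasurable
      (Eventually.of_forall fun u => ?_)
    rw [Real.norm_of_nonneg (hf0 u)]
    refine mul_le_of_le_one_right (gaussianPDFReal_nonneg _ _ _) ?_
    exact ENNReal.toReal_le_of_le_ofReal zero_le_one (by simpa using prob_le_one)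
  have hND' : NondegenerateSystem A (c u0) := by rw [hw0] at hND; exact hND
  have hfc : ContinuousAt f u0 := by
    have h1 : Continuous (gaussianPDFReal 0 1) := by
      unfold gaussianPDFReal; fun_prop
    refine h1.continuousAt.mul ?_
    exact (ENNReal.tendsto_toReal (measure_ne_top _ _)).comp (hm_cont A c hc u0 hND')
  have hder := hm_ftc f hfi hfm.stronglyMeasurable u0 hfc
  have hlin : HasDerivAt (fun s : ℝ => (s - b ⬝ᵥ μ) / σ) (1 / σ) (x i) :=
    ((hasDerivAt_id (x i)).sub_const _).div_const σ
  have hcomp := HasDerivAt.comp (x i) hder hlin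
  have hF : ∀ s, (gaussianMeasure μ Sig
          {z | ∀ j, B.mulVec z j ≤ Function.update x i s j}).toReal =
      ∫ u in Iic ((s - b ⬝ᵥ μ) / σ), f u := by
    intro s
    have hms : MeasurableSet {z | ∀ j, B.mulVec z j ≤ Function.update x i s j} := by
      have hBc : Continuous fun y : Fin (k+1) → ℝ => B.mulVec y :=
        Continuous.matrix_mulVec continuous_const continuous_id
      have : IsClosed {z | ∀ j, B.mulVec z j ≤ Function.update x i s j} := by
        simp only [Set.ofPred_forall]
        exact isClosed_iInter fun j => isClosed_le
          ((continuous_apply j).comp hBc) continuous_const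
      exact this.measurableSet
    set M : Matrix (Fin (k+1)) (Fin (k+1)) ℝ :=
      Matrix.of fun a => Fin.cons (Sig.mulVec b a / √(b ⬝ᵥ Sig.mulVec b)) (L a) with hM
    have hMM := hm_M Sig hSig b L hpos hL M hM
    have hMc : Measurable fun z : Fin (k+1) → ℝ => M.mulVec z + μ := by
      have : Continuous fun y : Fin (k+1) → ℝ => M.mulVec y :=
        Continuous.matrix_mulVec continuous_const continuous_id
      exact (this.add continuous_const).measurable
    rw [hm_affine μ Sig M hSig hMM _ hms, hm_split {v | M.mulVec v + μ ∈ {z | ∀ j, B.mulVec z j ≤ Function.update x i s j}} (hMc hms)]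
    have hMv : ∀ u y, M.mulVec (Fin.cons u y) + μ = L.mulVec y + wt u := by
      intro u y
      ext a
      rw [Pi.add_apply, Pi.add_apply, hM, hm_cons_mulVec]
      simp only [hwt, Pi.add_apply, Pi.smul_apply, smul_eq_mul, ← hv, ← hσ]
      ring
    have hset : ∀ u y, (∀ j, B.mulVec (M.mulVec (Fin.cons u y) + μ) j ≤ Function.update x i s j) ↔
        u ≤ (s - b ⬝ᵥ μ) / σ ∧ ∀ j, A.mulVec y j ≤ c u j := by
      intro u y
      rw [hMv, Fin.forall_iff_succAbove i]
      refine and_congr ?_ (forall_congr' fun j => ?_)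
      · have : B.mulVec (L.mulVec y + wt u) i = b ⬝ᵥ μ + u * σ := by
          show b ⬝ᵥ (L.mulVec y + wt u) = _
          rw [dotProduct_add, dotProduct_mulVec, hbL, zero_dotProduct, hwt]
          simp only [dotProduct_add, dotProduct_smul, ← hv, ← hss, smul_eq_mul]
          field_simp; ring
        rw [this, Function.update_self, le_div_iff₀ hσ0]
        constructor <;> intro h <;> linarith
      · have : B.mulVec (L.mulVec y + wt u) (i.succAbove j) = A.mulVec y j +
            (B.submatrix i.succAbove id).mulVec (wt u) j := by
          show B (i.succAbove j) ⬝ᵥ (L.mulVec y + wt u) = A j ⬝ᵥ y + _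
          rw [hA, hm_row, dotProduct_add, dotProduct_mulVec]
          rfl
        rw [this, Function.update_of_ne (Fin.succAbove_ne i j)]
        simp only [hcdef]
        constructor <;> intro h <;> linarith
    rw [integral_eq_lintegral_of_nonneg_ae (Eventually.of_forall hf0) hfm.aestronglyMeasurable,
      ← lintegral_indicator measurableSet_Iic]
    congr 1
    refine lintegral_congr fun u => ?_
    simp only [Set.mem_ofPred_eq, hset]
    by_cases hu : u ≤ (s - b ⬝ᵥ μ) / σ
    · rw [indicator_of_mem (by exact hu)]
      simp only [hu, true_and, hf]
      rw [ENNReal.ofReal_mul (gaussianPDFReal_nonneg _ _ _),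
        ENNReal.ofReal_toReal (measure_ne_top _ _)]
    · rw [indicator_of_notMem (by exact hu)]
      simp [hu]
  have hval : f u0 * (1 / σ) = g (x i) * (γ {y | ∀ j, A.mulVec y j ≤
      x (i.succAbove j) - (B.submatrix i.succAbove id).mulVec w j}).toReal := by
    rw [hf, hw0, hg]
    simp only [gaussianPDFReal, NNReal.coe_one, mul_one, sub_zero]
    have e1 : -u0 ^ 2 / 2 = -(x i - b ⬝ᵥ μ) ^ 2 / (2 * v) := by
      rw [hu0, ← hss]; field_simp
    rw [e1, Real.sqrt_mul (by positivity) v, ← hσ, mul_inv]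
    ring
  rw [← hval]
  exact hcomp.congr_of_eventuallyEq (Eventually.of_forall hF)
end

section
/- Let ξ follow a Gaussian mixture model ∑_{j=1}^K π_j 𝒩(μ_j, Σ_j) with each Σ_j positive definite and f(x) ≠ 0 on X. Then the chance-constrained program minimize_{x∈X} h(x) subject to Pr_{ξ∼P*}{f_0(x) + f(x)^⊤ξ ≤ 0} ≥ 1−α has the same optimal value as the lifted deterministic program minimize_{x∈X, y∈[0,1]^K} h(x) subject to Φ^{-1}(y_j)√(f(x)^⊤Σ_j f(x)) + f_0(x) + f(x)^⊤μ_j ≤ 0 for j = 1,…,K and ∑_{j=1}^K π_j y_j ≥ 1−α; moreover x is feasible for the chance-constrained program if and only if there exists y ∈ [0,1]^K making (x,y) feasible for the lifted program. -/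
open MeasureTheory ProbabilityTheory Filter Set Matrix
open scoped ENNReal NNReal

/-- The standard normal cumulative distribution function `Φ`. -/
noncomputable def stdNormalCDF (s : ℝ) : ℝ := cdf (gaussianReal 0 1) s

/-- The standard normal quantile function `Φ⁻¹`, valued in the extended reals (so
that `Φ⁻¹(0) = -∞` and `Φ⁻¹(1) = +∞`). -/
noncomputable def stdNormalInvCDF (p : ℝ) : EReal :=
  sInf ((fun s : ℝ => (s : EReal)) '' {s | p ≤ stdNormalCDF s})

lemma aux_quantile (y σ b : ℝ) (hσ : 0 < σ) :
    stdNormalInvCDF y * (σ : EReal) + (b : EReal) ≤ 0 ↔ y ≤ stdNormalCDF (-b / σ) := by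
  have key : ∀ q : EReal, q * (σ : EReal) + (b : EReal) ≤ 0 ↔ q ≤ ((-b / σ : ℝ) : EReal) := by
    intro q
    induction q with
    | bot => simp [EReal.bot_mul_coe_of_pos hσ]
    | top => simp [EReal.top_mul_coe_of_pos hσ]
    | coe q =>
      rw [← EReal.coe_mul, ← EReal.coe_add, ← EReal.coe_zero, EReal.coe_le_coe_iff,
        EReal.coe_le_coe_iff, le_div_iff₀ hσ]
      constructor <;> intro h <;> linarith
  rw [key]
  constructor
  · intro h
    have hc : Tendsto stdNormalCDF (nhdsWithin (-b / σ) (Ioi (-b / σ)))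
        (nhds (stdNormalCDF (-b / σ))) := by
      have := (cdf (gaussianReal 0 1)).right_continuous (-b / σ)
      exact (this.mono Ioi_subset_Ici_self)
    refine ge_of_tendsto hc ?_
    filter_upwards [self_mem_nhdsWithin] with s hs
    have h2 : stdNormalInvCDF y < (s : EReal) :=
      lt_of_le_of_lt h (EReal.coe_lt_coe_iff.2 hs)
    obtain ⟨_, ⟨s', hs', rfl⟩, hlt⟩ := sInf_lt_iff.1 h2
    exact le_trans hs' (monotone_cdf _ (EReal.coe_le_coe_iff.1 hlt.le))
  · intro h
    exact sInf_le ⟨_, h, rfl⟩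

lemma aux_pi (k : ℕ) : Measure.pi (fun _ : Fin k => gaussianReal 0 1) =
    volume.withDensity (fun w : Fin k → ℝ => ENNReal.ofReal (∏ i, gaussianPDFReal 0 1 (w i))) := by
  apply Measure.pi_eq
  intro s hs
  rw [withDensity_apply _ (MeasurableSet.univ_pi hs), volume_pi, Measure.restrict_pi_pi,
    ← ofReal_integral_eq_lintegral_ofReal, integral_fintype_prod_eq_prod
      (fun _ x => gaussianPDFReal 0 1 x), ENNReal.ofReal_prod_of_nonneg]
  · refine Finset.prod_congr rfl fun i _ => ?_
    rw [gaussianReal_apply_eq_integral 0 one_ne_zero]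
  · intro i _
    exact integral_nonneg fun x => gaussianPDFReal_nonneg _ _ _
  · exact Integrable.fintype_prod (f := fun _ x => gaussianPDFReal 0 1 x)
      fun i => (integrable_gaussianPDFReal 0 1).restrict
  · exact ae_of_all _ fun x => Finset.prod_nonneg fun i _ => gaussianPDFReal_nonneg _ _ _

lemma aux_law {k : ℕ} (c : Fin k → ℝ) :
    (Measure.pi (fun _ : Fin k => gaussianReal 0 1)).map (fun w => c ⬝ᵥ w) =
      gaussianReal 0 (c ⬝ᵥ c).toNNReal := by
  have h := IsGaussian.map_eq_gaussianReal (μ := stdGaussian (EuclideanSpace ℝ (Fin k)))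
    (innerSL ℝ (WithLp.toLp 2 c))
  rw [variance_dual_stdGaussian, integral_strongDual_stdGaussian, innerSL_apply_norm,
    ← map_pi_eq_stdGaussian, Measure.map_map (by fun_prop) (by fun_prop),
    EuclideanSpace.real_norm_sq_eq] at h
  convert h using 2
  · ext w
    simp [dotProduct, PiLp.inner_apply, mul_comm]
  · simp [dotProduct, sq]

lemma aux_sqrt {k : ℕ} {S : Matrix (Fin k) (Fin k) ℝ} (hS : S.PosDef) :
    ∃ A : Matrix (Fin k) (Fin k) ℝ, A * Aᵀ = S := by
  open scoped MatrixOrder in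
  have h1 := CFC.sqrt_mul_sqrt_self S hS.posSemidef.nonneg
  have h2 : star (CFC.sqrt S) = CFC.sqrt S := (CFC.sqrt_nonneg S).isSelfAdjoint
  refine ⟨CFC.sqrt S, ?_⟩
  rw [star_eq_conjTranspose, conjTranspose_eq_transpose_of_trivial] at h2
  rw [h2, h1]

lemma aux_pdf {k : ℕ} (μ : Fin k → ℝ) (A : Matrix (Fin k) (Fin k) ℝ) (hA : A.det ≠ 0)
    (w : Fin k → ℝ) :
    |A.det| * gaussianPdf μ (A * Aᵀ) (μ + A *ᵥ w) = ∏ i, gaussianPDFReal 0 1 (w i) := by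
  have hu : IsUnit A.det := isUnit_iff_ne_zero.2 hA
  have hq : (A *ᵥ w) ⬝ᵥ (A * Aᵀ)⁻¹ *ᵥ (A *ᵥ w) = ∑ i, w i ^ 2 := by
    rw [Matrix.mul_inv_rev, mulVec_mulVec, Matrix.mul_assoc, Matrix.nonsing_inv_mul _ hu,
      Matrix.mul_one, ← Matrix.transpose_nonsing_inv, mulVec_transpose, dotProduct_comm,
      ← dotProduct_mulVec, mulVec_mulVec, Matrix.nonsing_inv_mul _ hu, one_mulVec]
    simp [dotProduct, sq]
  unfold gaussianPdf gaussianPDFReal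
  rw [add_sub_cancel_left, hq, Finset.prod_mul_distrib, ← Real.exp_sum, Matrix.det_mul,
    det_transpose, Real.sqrt_mul (by positivity), Real.sqrt_mul_self_eq_abs, ← mul_assoc]
  congr 1
  · have : |A.det| ≠ 0 := by simpa using hA
    have h2 : √((2 * Real.pi) ^ k) = √(2 * Real.pi) ^ k := by
      rw [Real.sqrt_eq_iff_mul_self_eq (by positivity) (by positivity), ← mul_pow,
        Real.mul_self_sqrt (by positivity)]
    simp [h2]
    field_simp
    rw [← mul_pow, mul_one_div_cancel (by positivity), one_pow]
  · congr 1
    rw [Finset.mul_sum]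
    refine Finset.sum_congr rfl fun i _ => ?_
    simp; ring

lemma aux_meas_pdf {k : ℕ} (μ : Fin k → ℝ) (S : Matrix (Fin k) (Fin k) ℝ) :
    Measurable (gaussianPdf μ S) := by
  have : Continuous (gaussianPdf μ S) := by
    unfold gaussianPdf
    fun_prop
  exact this.measurable

lemma aux_cov {k : ℕ} (μ : Fin k → ℝ) (A : Matrix (Fin k) (Fin k) ℝ) (hA : A.det ≠ 0)
    (F : (Fin k → ℝ) → ℝ≥0∞) (hF : Measurable F) :
    ∫⁻ z, F z = ∫⁻ w, ENNReal.ofReal |A.det| * F (μ + A *ᵥ w) := by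
  have h := Real.map_matrix_volume_pi_eq_smul_volume_pi hA
  have hm : Measurable (toLin' A) := (LinearMap.continuous_of_finiteDimensional _).measurable
  have hF' : Measurable fun u => F (μ + u) := hF.comp (measurable_const_add μ)
  have h1 : ∫⁻ w, F (μ + A *ᵥ w) = ENNReal.ofReal |A.det⁻¹| * ∫⁻ z, F z := by
    rw [← lintegral_add_left_eq_self F μ, ← smul_eq_mul, ← lintegral_smul_measure, ← h,
      lintegral_map hF' hm]
    simp
  rw [lintegral_const_mul' _ _ ENNReal.ofReal_ne_top, h1, ← mul_assoc,
    ← ENNReal.ofReal_mul (abs_nonneg _), ← abs_mul, mul_inv_cancel₀ hA]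
  simp

lemma aux_component {k : ℕ} (μ : Fin k → ℝ) (S : Matrix (Fin k) (Fin k) ℝ) (hS : S.PosDef)
    (c : Fin k → ℝ) (hc : c ≠ 0) (c0 : ℝ) :
    ∫⁻ z in {z | c0 + c ⬝ᵥ z ≤ 0}, ENNReal.ofReal (gaussianPdf μ S z) =
      ENNReal.ofReal (stdNormalCDF (-(c0 + c ⬝ᵥ μ) / √(c ⬝ᵥ S *ᵥ c))) := by
  have hpos : 0 < c ⬝ᵥ S *ᵥ c := by simpa using hS.dotProduct_mulVec_pos hc
  obtain ⟨A, rfl⟩ := aux_sqrt hS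
  have hA : A.det ≠ 0 := by
    have := hS.det_pos
    rw [Matrix.det_mul] at this
    intro h0
    simp [h0] at this
  have hms : MeasurableSet {z : Fin k → ℝ | c0 + c ⬝ᵥ z ≤ 0} :=
    measurableSet_le (by unfold dotProduct; fun_prop) measurable_const
  have hm : Measurable fun z => ENNReal.ofReal (gaussianPdf μ (A * Aᵀ) z) :=
    (aux_meas_pdf _ _).ennreal_ofReal
  rw [← lintegral_indicator hms, aux_cov μ A hA _ (hm.indicator hms)]
  set d := Aᵀ *ᵥ c with hd
  have hdd : d ⬝ᵥ d = c ⬝ᵥ (A * Aᵀ) *ᵥ c := by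
    rw [← mulVec_mulVec, dotProduct_mulVec c, ← mulVec_transpose]
  have hdw : ∀ w, c ⬝ᵥ (A *ᵥ w) = d ⬝ᵥ w := by
    intro w
    rw [dotProduct_mulVec, ← mulVec_transpose]
  have hms' : MeasurableSet {w : Fin k → ℝ | d ⬝ᵥ w ≤ -(c0 + c ⬝ᵥ μ)} :=
    measurableSet_le (by unfold dotProduct; fun_prop) measurable_const
  have e1 : ∀ w, ENNReal.ofReal |A.det| * ({z : Fin k → ℝ | c0 + c ⬝ᵥ z ≤ 0}.indicator
      (fun z => ENNReal.ofReal (gaussianPdf μ (A * Aᵀ) z)) (μ + A *ᵥ w)) =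
      {w : Fin k → ℝ | d ⬝ᵥ w ≤ -(c0 + c ⬝ᵥ μ)}.indicator
        (fun w => ENNReal.ofReal (∏ i, gaussianPDFReal 0 1 (w i))) w := by
    intro w
    have hiff : c0 + c ⬝ᵥ (μ + A *ᵥ w) ≤ 0 ↔ d ⬝ᵥ w ≤ -(c0 + c ⬝ᵥ μ) := by
      rw [dotProduct_add, hdw]
      constructor <;> intro h <;> linarith
    simp only [Set.indicator_apply, mem_setOf_eq, hiff]
    split_ifs
    · rw [← ENNReal.ofReal_mul (abs_nonneg _), aux_pdf μ A hA]
    · simp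
  simp_rw [e1]
  rw [lintegral_indicator hms', ← withDensity_apply _ hms', ← aux_pi]
  have hdm : Measurable fun w : Fin k → ℝ => d ⬝ᵥ w := by unfold dotProduct; fun_prop
  have e2 : Measure.pi (fun _ : Fin k => gaussianReal 0 1)
      {w : Fin k → ℝ | d ⬝ᵥ w ≤ -(c0 + c ⬝ᵥ μ)} =
      gaussianReal 0 (d ⬝ᵥ d).toNNReal (Iic (-(c0 + c ⬝ᵥ μ))) := by
    rw [← aux_law, Measure.map_apply hdm measurableSet_Iic]
    rfl
  rw [e2, hdd]
  set v := c ⬝ᵥ (A * Aᵀ) *ᵥ c with hv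
  have hσ : 0 < √v := Real.sqrt_pos.2 hpos
  have e3 : gaussianReal 0 v.toNNReal = (gaussianReal 0 1).map (√v * ·) := by
    rw [gaussianReal_map_const_mul]
    congr 1
    · simp
    · ext
      simp [Real.sq_sqrt hpos.le, hpos.le]
  rw [e3, Measure.map_apply (by fun_prop) measurableSet_Iic, stdNormalCDF, ofReal_cdf]
  congr 1
  ext t
  simp only [mem_preimage, mem_Iic]
  rw [le_div_iff₀ hσ, mul_comm]

/-- Under a Gaussian mixture model with components `𝒩(μ_j, Σ_j)`
(`Σ_j ≻ 0`) and `f(x) ≠ 0` on `X`, the chance-constrained program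
`min_{x∈X} h(x) s.t. Pr_{ξ∼P*}{f₀(x) + f(x)ᵀξ ≤ 0} ≥ 1-α` has the same optimal
value as the lifted program with auxiliary variables `y ∈ [0,1]^K` and constraints
`Φ⁻¹(y_j)√(f(x)ᵀΣ_j f(x)) + f₀(x) + f(x)ᵀμ_j ≤ 0` and `∑_j π_j y_j ≥ 1-α`;
moreover `x` is feasible for the former iff some `y` makes `(x,y)` feasible for the
latter. -/
theorem gmm_ccp_lifted_reformulation
    {k : ℕ} {K : ℕ} {E : Type*}
    (μs : Fin K → (Fin k → ℝ)) (Sigs : Fin K → Matrix (Fin k) (Fin k) ℝ)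
    (hSigs : ∀ j, (Sigs j).PosDef)
    (π : Fin K → ℝ) (hπ : ∀ j, 0 ≤ π j) (hπsum : ∑ j, π j = 1)
    (Pstar : Measure (Fin k → ℝ))
    (hPstar : Pstar = volume.withDensity
      (fun z => ENNReal.ofReal (∑ j, π j * gaussianPdf (μs j) (Sigs j) z)))
    (X : Set E) (h : E → ℝ) (f0 : E → ℝ) (f : E → (Fin k → ℝ))
    (hf : ∀ x ∈ X, f x ≠ 0)
    (α : ℝ) (hα : α ∈ Ioo (0 : ℝ) 1)
    -- the feasible set of the chance-constrained program
    (CCPFeas : Set E)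
    (hCCPFeas : CCPFeas =
      {x ∈ X | 1 - α ≤ (Pstar {z | f0 x + f x ⬝ᵥ z ≤ 0}).toReal})
    -- the feasible set of the lifted deterministic program
    (LiftFeas : Set (E × (Fin K → ℝ)))
    (hLiftFeas : LiftFeas = {p | p.1 ∈ X ∧ (∀ j, p.2 j ∈ Icc (0 : ℝ) 1) ∧
      (∀ j, stdNormalInvCDF (p.2 j) *
          ((Real.sqrt (f p.1 ⬝ᵥ (Sigs j).mulVec (f p.1)) : ℝ) : EReal) +
          ((f0 p.1 + f p.1 ⬝ᵥ μs j : ℝ) : EReal) ≤ (0 : EReal)) ∧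
      1 - α ≤ ∑ j, π j * p.2 j}) :
    (∀ x ∈ X, (x ∈ CCPFeas ↔ ∃ y : Fin K → ℝ, (x, y) ∈ LiftFeas)) ∧
    sInf (h '' CCPFeas) = sInf ((fun p : E × (Fin K → ℝ) => h p.1) '' LiftFeas) := by
  have hprob : ∀ x ∈ X, (Pstar {z | f0 x + f x ⬝ᵥ z ≤ 0}).toReal =
      ∑ j, π j * stdNormalCDF (-(f0 x + f x ⬝ᵥ μs j) / √(f x ⬝ᵥ Sigs j *ᵥ f x)) := by
    intro x hx
    have hms : MeasurableSet {z : Fin k → ℝ | f0 x + f x ⬝ᵥ z ≤ 0} :=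
      measurableSet_le (by unfold dotProduct; fun_prop) measurable_const
    have hn : ∀ j z, 0 ≤ gaussianPdf (μs j) (Sigs j) z := by
      intro j z
      unfold gaussianPdf
      positivity
    have hn2 : ∀ s, 0 ≤ stdNormalCDF s := fun s => cdf_nonneg _ _
    rw [hPstar, withDensity_apply _ hms]
    have e : ∀ z, ENNReal.ofReal (∑ j, π j * gaussianPdf (μs j) (Sigs j) z) =
        ∑ j, ENNReal.ofReal (π j) * ENNReal.ofReal (gaussianPdf (μs j) (Sigs j) z) := by
      intro z
      rw [ENNReal.ofReal_sum_of_nonneg fun j _ => mul_nonneg (hπ j) (hn j z)]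
      exact Finset.sum_congr rfl fun j _ => ENNReal.ofReal_mul (hπ j)
    simp_rw [e]
    rw [lintegral_finsetSum _ fun j _ => (aux_meas_pdf _ _).ennreal_ofReal.const_mul _]
    simp_rw [lintegral_const_mul' _ _ ENNReal.ofReal_ne_top,
      aux_component _ _ (hSigs _) (f x) (hf x hx) (f0 x), ← ENNReal.ofReal_mul (hπ _)]
    rw [← ENNReal.ofReal_sum_of_nonneg fun j _ => mul_nonneg (hπ j) (hn2 _),
      ENNReal.toReal_ofReal (Finset.sum_nonneg fun j _ => mul_nonneg (hπ j) (hn2 _))]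
  have hiff : ∀ x ∈ X, (x ∈ CCPFeas ↔ ∃ y : Fin K → ℝ, (x, y) ∈ LiftFeas) := by
    intro x hx
    have hσ : ∀ j, 0 < √(f x ⬝ᵥ Sigs j *ᵥ f x) := fun j =>
      Real.sqrt_pos.2 (by simpa using (hSigs j).dotProduct_mulVec_pos (hf x hx))
    rw [hCCPFeas, hLiftFeas]
    simp only [mem_setOf_eq, hprob x hx, aux_quantile _ _ _ (hσ _), hx, true_and,
      and_congr_right_iff, and_imp, hprob x hx]
    constructor
    · rintro hle
      exact ⟨_, fun j => ⟨cdf_nonneg _ _, cdf_le_one _ _⟩, fun j => le_rfl, hle⟩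
    · rintro ⟨y, -, hy, hle⟩
      exact hle.trans (Finset.sum_le_sum fun j _ => mul_le_mul_of_nonneg_left (hy j) (hπ j))
  refine ⟨hiff, ?_⟩
  congr 1
  ext r
  constructor
  · rintro ⟨x, hx, rfl⟩
    have hxX : x ∈ X := by rw [hCCPFeas] at hx; exact hx.1
    obtain ⟨y, hy⟩ := (hiff x hxX).1 hx
    exact ⟨(x, y), hy, rfl⟩
  · rintro ⟨⟨x, y⟩, hxy, rfl⟩
    have hxX : x ∈ X := by rw [hLiftFeas] at hxy; exact hxy.1
    exact ⟨x, (hiff x hxX).2 ⟨y, hxy⟩, rfl⟩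
end

section
/- Let X be a bounded random variable and take the utility function u(z) = 1 − e^{−z} (which is concave, nondecreasing, normalized with u(0) = 0 and u'(0) = 1). Then the OCE risk measure equals the entropic risk measure: −sup_{η∈ℝ} { η + E[1 − e^{−(X−η)}] } = log E[e^{−X}], i.e., the supremum over η of η + E[u(X−η)] equals −log E[e^{−X}]. -/
open MeasureTheory ProbabilityTheory Filter Set

/-- For the exponential utility `u(z) = 1 - e^{-z}` and a bounded
random variable `X`, the OCE risk measure is the entropic risk measure:
`-sup_{η∈ℝ} {η + E[1 - e^{-(X-η)}]} = log E[e^{-X}]`, i.e.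
`sup_{η∈ℝ} {η + E[u(X-η)]} = -log E[e^{-X}]`. -/
theorem oce_exponential_utility_entropic
    {Ω : Type*} [MeasurableSpace Ω] (P : Measure Ω) [IsProbabilityMeasure P]
    (X : Ω → ℝ) (hX : Measurable X)
    (hbdd : ∃ C : ℝ, ∀ᵐ ω ∂P, |X ω| ≤ C) :
    (-⨆ η : ℝ, (η + ∫ ω, (1 - Real.exp (-(X ω - η))) ∂P)) =
      Real.log (∫ ω, Real.exp (-X ω) ∂P) ∧
    (⨆ η : ℝ, (η + ∫ ω, (1 - Real.exp (-(X ω - η))) ∂P)) =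
      -Real.log (∫ ω, Real.exp (-X ω) ∂P) := by
  obtain ⟨C, hC⟩ := hbdd
  have hint : Integrable (fun ω => Real.exp (-X ω)) P := by
    refine Integrable.of_bound (C := Real.exp C)
      (Real.measurable_exp.comp hX.neg).aestronglyMeasurable ?_
    filter_upwards [hC] with ω hω
    rw [Real.norm_eq_abs, abs_of_pos (Real.exp_pos _)]
    exact Real.exp_le_exp.mpr (by linarith [(abs_le.mp hω).1])
  have hpos : 0 < ∫ ω, Real.exp (-X ω) ∂P := integral_exp_pos hint
  have hval : ∀ η : ℝ, η + ∫ ω, (1 - Real.exp (-(X ω - η))) ∂P =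
      η + (1 - Real.exp (η + Real.log (∫ ω, Real.exp (-X ω) ∂P))) := by
    intro η
    have h1 : ∀ ω, Real.exp (-(X ω - η)) = Real.exp η * Real.exp (-X ω) := by
      intro ω
      rw [← Real.exp_add]
      congr 1
      ring
    simp_rw [h1]
    rw [integral_sub (integrable_const _) (hint.const_mul _), integral_const_mul,
      Real.exp_add, Real.exp_log hpos]
    simp
  have key : (⨆ η : ℝ, (η + ∫ ω, (1 - Real.exp (-(X ω - η))) ∂P)) =
      -Real.log (∫ ω, Real.exp (-X ω) ∂P) := by
    simp_rw [hval]
    generalize Real.log (∫ ω, Real.exp (-X ω) ∂P) = L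
    have hle : ∀ η : ℝ, η + (1 - Real.exp (η + L)) ≤ -L := fun η => by
      linarith [Real.add_one_le_exp (η + L)]
    apply le_antisymm (ciSup_le hle)
    refine le_ciSup_of_le ⟨-L, ?_⟩ (-L) (by simp)
    rintro _ ⟨η, rfl⟩
    exact hle η
  exact ⟨by rw [key, neg_neg], key⟩
end
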